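/- arXiv:1805.01121 — 2 statements merged into one kernel-verified Lean document; each statement's English description precedes it below -/
import Mathlib

section
/- Let n be a positive integer, let q be a real number with 0 < q < 1, and let z > 0 be real. Then ∏_{k=0}^{n-1} Γ_q(z + k/n) = (((q; q)_∞)^n (1-q)^{(n-1)/2} / (q^{1/n}; q^{1/n})_∞) · ((1-q)/(1-q^{1/n}))^{1-nz} · Γ_{q^{1/n}}(nz). -/
/-- Infinite q-Pochhammer symbol `(a; q)_∞ = ∏_{i=0}^∞ (1 - a qⁱ)` (real version). -/
noncomputable def qPochR (a q : ℝ) : ℝ := ∏' i : ℕ, (1 - a * q ^ i)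

/-- The q-gamma function `Γ_q(z) = ((q;q)_∞ / (q^z;q)_∞) (1-q)^{1-z}` for `0 < q < 1`. -/
noncomputable def qGamma (q z : ℝ) : ℝ :=
  qPochR q q / qPochR (q ^ z) q * (1 - q) ^ (1 - z)

/-!
Put `p = q^{1/n}`, so that `q^{z + k/n} = q^z pᵏ` and `q = pⁿ`. Sorting the factors of `(q^z; p)_∞`
by the residue `k` of their index modulo `n` gives `(q^z; p)_∞ = ∏_{k<n} (q^{z + k/n}; q)_∞`. Since
`q^z = p^{nz}`, the left side is also the infinite product in the denominator of `Γ_p(nz)`.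
-/

theorem prod_range_tprod_mul_add {M : Type*} [CommMonoid M] [TopologicalSpace M]
    [ContinuousMul M] [T3Space M] {f : ℕ → M} {n : ℕ} (hn : n ≠ 0) (hf : Multipliable f)
    (hres : ∀ k < n, Multipliable fun i => f (i * n + k)) :
    ∏ k ∈ Finset.range n, ∏' i, f (i * n + k) = ∏' j, f j := by
  have : NeZero n := ⟨hn⟩
  let e : Fin n × ℕ ≃ ℕ := (Equiv.prodComm _ _).trans (Nat.divModEquiv n).symm
  calc ∏ k ∈ Finset.range n, ∏' i, f (i * n + k)
      = ∏' k : Fin n, ∏' i, f (i * n + k) := by rw [Finset.prod_range, tprod_fintype]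
    _ = ∏' x, f (e x) :=
        ((e.multipliable_iff.2 hf).tprod_prod' fun k => hres k k.isLt).symm
    _ = ∏' j, f j := e.tprod_eq f

theorem sum_range_add_div {K : Type*} [Field K] [CharZero K] {n : ℕ} (hn : n ≠ 0) (z : K) :
    ∑ k ∈ Finset.range n, (z + k / n) = n * z + (n - 1) / 2 := by
  have hn' : (n : K) ≠ 0 := Nat.cast_ne_zero.2 hn
  have hgauss : ∑ k ∈ Finset.range n, (k : K) = n * (n - 1) / 2 := by
    rw [← Nat.cast_sum, Finset.sum_range_id, ← Nat.choose_two_right, Nat.cast_choose_two]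
  rw [Finset.sum_add_distrib, ← Finset.sum_div, hgauss, Finset.sum_const, Finset.card_range,
    nsmul_eq_mul]
  field_simp

theorem summable_norm_neg_mul_pow {R : Type*} [NormedRing R] (a : R) {q : R} (hq : ‖q‖ < 1) :
    Summable fun i : ℕ => ‖-(a * q ^ i)‖ := by
  simp only [norm_neg]
  exact Summable.of_nonneg_of_le (fun _ => norm_nonneg _) (fun _ => norm_mul_le _ _)
    ((summable_norm_geometric_of_norm_lt_one hq).mul_left ‖a‖)

theorem multipliable_one_sub_mul_pow {R : Type*} [NormedCommRing R] [NormOneClass R]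
    [CompleteSpace R] (a : R) {q : R} (hq : ‖q‖ < 1) :
    Multipliable fun i : ℕ => 1 - a * q ^ i := by
  simpa only [sub_eq_add_neg] using
    multipliable_one_add_of_summable (summable_norm_neg_mul_pow a hq)

theorem qPochR_ne_zero {a q : ℝ} (hq : |q| < 1) (ha : ∀ i : ℕ, a * q ^ i ≠ 1) :
    qPochR a q ≠ 0 := by
  simp only [qPochR, sub_eq_add_neg]
  refine tprod_one_add_ne_zero_of_summable (fun i => ?_) (summable_norm_neg_mul_pow a hq)
  rw [← sub_eq_add_neg]
  exact sub_ne_zero.2 (ha i).symm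

theorem qPochR_self_ne_zero {q : ℝ} (hq : |q| < 1) : qPochR q q ≠ 0 := by
  refine qPochR_ne_zero hq fun i => ?_
  rw [← pow_succ']
  exact ((le_abs_self _).trans_lt
    (abs_pow q _ ▸ pow_lt_one₀ (abs_nonneg q) hq i.succ_ne_zero)).ne

theorem prod_qPochR_mul_pow (a : ℝ) {p : ℝ} (hp : |p| < 1) {n : ℕ} (hn : n ≠ 0) :
    ∏ k ∈ Finset.range n, qPochR (a * p ^ k) (p ^ n) = qPochR a p := by
  have hpn : |p ^ n| < 1 := abs_pow p n ▸ pow_lt_one₀ (abs_nonneg p) hp hn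
  have hfactor (k i : ℕ) : 1 - a * p ^ k * (p ^ n) ^ i = 1 - a * p ^ (i * n + k) := by ring
  have hres (k : ℕ) : Multipliable fun i : ℕ => 1 - a * p ^ (i * n + k) := by
    simpa only [hfactor] using multipliable_one_sub_mul_pow (a * p ^ k) hpn
  simp only [qPochR, hfactor]
  exact prod_range_tprod_mul_add hn (multipliable_one_sub_mul_pow a hp) fun k _ => hres k

theorem prod_qPochR_rpow_add_div {q : ℝ} (hq0 : 0 < q) (hq1 : q < 1) {n : ℕ} (hn : n ≠ 0)
    (z : ℝ) :
    ∏ k ∈ Finset.range n, qPochR (q ^ (z + (k : ℝ) / n)) q =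
      qPochR (q ^ z) (q ^ ((1 : ℝ) / n)) := by
  have hroot : (q ^ ((1 : ℝ) / n)) ^ n = q := by
    rw [one_div, Real.rpow_inv_natCast_pow hq0.le hn]
  have hroot_lt : |q ^ ((1 : ℝ) / n)| < 1 := by
    rw [abs_of_pos (Real.rpow_pos_of_pos hq0 _)]
    exact Real.rpow_lt_one hq0.le hq1 (by positivity)
  have hshift (k : ℕ) : q ^ (z + (k : ℝ) / n) = q ^ z * (q ^ ((1 : ℝ) / n)) ^ k := by
    rw [Real.rpow_add hq0, ← Real.rpow_mul_natCast hq0.le, one_div_mul_eq_div]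
  simpa only [hshift, hroot] using prod_qPochR_mul_pow (q ^ z) hroot_lt hn

theorem prod_rpow_one_sub_add_div {x : ℝ} (hx : 0 < x) {n : ℕ} (hn : n ≠ 0) (z : ℝ) :
    ∏ k ∈ Finset.range n, x ^ (1 - (z + (k : ℝ) / n)) =
      x ^ (((n : ℝ) - 1) / 2) * x ^ (1 - (n : ℝ) * z) := by
  rw [← Real.rpow_sum_of_pos hx, ← Real.rpow_add hx, Finset.sum_sub_distrib, sum_range_add_div hn,
    Finset.sum_const, Finset.card_range, nsmul_one]
  congr 1
  ring

theorem prod_qGamma_add_div {q : ℝ} (hq0 : 0 < q) (hq1 : q < 1) {n : ℕ} (hn : n ≠ 0) (z : ℝ) :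
    ∏ k ∈ Finset.range n, qGamma q (z + (k : ℝ) / n) =
      qPochR q q ^ n / qPochR (q ^ z) (q ^ ((1 : ℝ) / n)) *
        ((1 - q) ^ (((n : ℝ) - 1) / 2) * (1 - q) ^ (1 - (n : ℝ) * z)) := by
  simp only [qGamma, Finset.prod_mul_distrib, Finset.prod_div_distrib, Finset.prod_const,
    Finset.card_range, prod_qPochR_rpow_add_div hq0 hq1 hn,
    prod_rpow_one_sub_add_div (sub_pos.2 hq1) hn]

/-- At the poles `n z ∈ {0, -1, -2, …}` both sides are `0`, because `x / 0 = 0`. -/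
theorem q_gauss_multiplication_general_general (n : ℕ) (hn : 0 < n) (q : ℝ)
    (hq0 : 0 < q) (hq1 : q < 1) (z : ℝ) :
    ∏ k ∈ Finset.range n, qGamma q (z + (k : ℝ) / n) =
      (qPochR q q) ^ n * (1 - q) ^ (((n : ℝ) - 1) / 2) /
          qPochR (q ^ ((1 : ℝ) / n)) (q ^ ((1 : ℝ) / n)) *
        ((1 - q) / (1 - q ^ ((1 : ℝ) / n))) ^ (1 - (n : ℝ) * z) *
        qGamma (q ^ ((1 : ℝ) / n)) ((n : ℝ) * z) := by
  have hroot_pos : 0 < q ^ ((1 : ℝ) / n) := Real.rpow_pos_of_pos hq0 _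
  have hroot_lt : q ^ ((1 : ℝ) / n) < 1 := Real.rpow_lt_one hq0.le hq1 (by positivity)
  have hroot_rpow : (q ^ ((1 : ℝ) / n)) ^ ((n : ℝ) * z) = q ^ z := by
    rw [← Real.rpow_mul hq0.le]
    congr 1
    field_simp
  have hpoch : qPochR (q ^ ((1 : ℝ) / n)) (q ^ ((1 : ℝ) / n)) ≠ 0 :=
    qPochR_self_ne_zero (by rwa [abs_of_pos hroot_pos])
  have hbase : (1 - q ^ ((1 : ℝ) / n)) ^ (1 - (n : ℝ) * z) ≠ 0 :=
    (Real.rpow_pos_of_pos (sub_pos.2 hroot_lt) _).ne'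
  rw [prod_qGamma_add_div hq0 hq1 hn.ne', qGamma, hroot_rpow,
    Real.div_rpow (sub_pos.2 hq1).le (sub_pos.2 hroot_lt).le]
  field_simp

theorem q_gauss_multiplication_general (n : ℕ) (hn : 0 < n) (q : ℝ)
    (hq0 : 0 < q) (hq1 : q < 1) (z : ℝ) (hz : 0 < z) :
    ∏ k ∈ Finset.range n, qGamma q (z + (k : ℝ) / n) =
      (qPochR q q) ^ n * (1 - q) ^ (((n : ℝ) - 1) / 2) /
          qPochR (q ^ ((1 : ℝ) / n)) (q ^ ((1 : ℝ) / n)) *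
        ((1 - q) / (1 - q ^ ((1 : ℝ) / n))) ^ (1 - (n : ℝ) * z) *
        qGamma (q ^ ((1 : ℝ) / n)) ((n : ℝ) * z) :=
  q_gauss_multiplication_general_general n hn q hq0 hq1 z
end

section
/- Let n be a positive integer, let τ be a complex number with Im(τ) > 0, set q = e^{πiτ} and τ' = -1/τ. Then θ₁(π/2 | τ'/n) = (-iτ'/n)^{-1/2} · (q^n, q^n, q^{2n}; q^{2n})_∞, where (-iτ'/n)^{-1/2} is taken with the principal branch of the square root. -/
open Complex

/-- Infinite q-Pochhammer symbol `(a; q)_∞ = ∏_{i=0}^∞ (1 - a qⁱ)`. -/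
noncomputable def qPoch (a q : ℂ) : ℂ := ∏' i : ℕ, (1 - a * q ^ i)

/-- Jacobi's first theta function
`θ₁(z | τ) = 2 ∑_{n=0}^∞ (-1)ⁿ e^{πiτ(2n+1)²/4} sin((2n+1)z)`. -/
noncomputable def theta1 (z τ : ℂ) : ℂ :=
  2 * ∑' n : ℕ, (-1 : ℂ) ^ n * Complex.exp (Real.pi * Complex.I * τ * (2 * n + 1) ^ 2 / 4) *
    Complex.sin ((2 * n + 1) * z)

/-!
The modular inversion `τ ↦ -1 / τ` turns `θ₁(π / 2 | τ)` into `(-iτ)^(-1/2)` times the theta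
series `∑ (-1)ᵏ Q^(k²)`, `Q = e^(-πi / τ)`, which is the case `z = -1` of the Jacobi triple product
`∑ q^(k²) zᵏ = (-zq, -q/z, q²; q²)_∞`. The latter is the limit of a finite identity: Gauss's
`q`-binomial theorem for `(a; q²)_{m+n}`, re-centred by `a = -zq / q^(2n)` so that the factors split
into `m` involving `z` and `n` involving `1 / z`.
-/

open Filter Topology

section Finite

variable {R : Type*} [CommRing R]

/-- The finite `q`-Pochhammer symbol `(a; q)_n = ∏_{i<n} (1 - a qⁱ)`, whose limit as `n → ∞` is
`qPoch a q`. -/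
def finiteQPoch (a q : R) (n : ℕ) : R := ∏ i ∈ Finset.range n, (1 - a * q ^ i)

@[simp]
lemma finiteQPoch_zero (a q : R) : finiteQPoch a q 0 = 1 := Finset.prod_range_zero _

lemma finiteQPoch_succ (a q : R) (n : ℕ) :
    finiteQPoch a q (n + 1) = finiteQPoch a q n * (1 - a * q ^ n) :=
  Finset.prod_range_succ _ _

lemma finiteQPoch_add (a q : R) (m n : ℕ) :
    finiteQPoch a q (m + n) = finiteQPoch a q m * finiteQPoch (a * q ^ m) q n := by
  simp only [finiteQPoch, Finset.prod_range_add, pow_add, mul_assoc]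

lemma finiteQPoch_succ' (a q : R) (n : ℕ) :
    finiteQPoch a q (n + 1) = (1 - a) * finiteQPoch (a * q) q n := by
  rw [add_comm, finiteQPoch_add, finiteQPoch_succ, finiteQPoch_zero, pow_zero, pow_one, mul_one,
    one_mul]

/-- The Gaussian binomial coefficient `[n choose k]_q`, defined by the `q`-Pascal rule so that it
makes sense in every commutative ring, also where `1 - q ^ j` is not invertible. -/
def qChoose (q : R) : ℕ → ℕ → R
  | _, 0 => 1
  | 0, _ + 1 => 0
  | n + 1, k + 1 => qChoose q n k + q ^ (k + 1) * qChoose q n (k + 1)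

@[simp]
lemma qChoose_zero_right (q : R) (n : ℕ) : qChoose q n 0 = 1 := by
  cases n <;> rfl

lemma qChoose_succ_succ (q : R) (n k : ℕ) :
    qChoose q (n + 1) (k + 1) = qChoose q n k + q ^ (k + 1) * qChoose q n (k + 1) := rfl

lemma qChoose_eq_zero_of_lt (q : R) {n k : ℕ} (h : n < k) : qChoose q n k = 0 := by
  induction n generalizing k with
  | zero => obtain _ | k := k <;> trivial
  | succ n ih =>
    obtain _ | k := k
    · omega
    · rw [qChoose_succ_succ, ih (by omega), ih (by omega), mul_zero, add_zero]

@[simp]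
lemma qChoose_self (q : R) (n : ℕ) : qChoose q n n = 1 := by
  induction n with
  | zero => rfl
  | succ n ih => rw [qChoose_succ_succ, ih, qChoose_eq_zero_of_lt q n.lt_succ_self, mul_zero,
      add_zero]

lemma qChoose_mul_finiteQPoch_mul_finiteQPoch (q : R) (m n : ℕ) :
    qChoose q (m + n) m * finiteQPoch q q m * finiteQPoch q q n = finiteQPoch q q (m + n) := by
  induction m generalizing n with
  | zero => simp
  | succ m ihm =>
    induction n with
    | zero => simp
    | succ n ihn =>
      have hm := ihm (n + 1)
      rw [show m + 1 + n = m + (n + 1) by ring] at ihn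
      rw [show m + 1 + (n + 1) = m + (n + 1) + 1 by ring, qChoose_succ_succ,
        finiteQPoch_succ q q (m + (n + 1))]
      rw [finiteQPoch_succ q q m] at ihn ⊢
      rw [finiteQPoch_succ q q n] at hm ⊢
      linear_combination (1 - q * q ^ m) * hm + q ^ (m + 1) * (1 - q * q ^ n) * ihn

theorem finiteQPoch_eq_sum_qChoose (a q : R) (n : ℕ) :
    finiteQPoch a q n =
      ∑ k ∈ Finset.range (n + 1), qChoose q n k * q ^ k.choose 2 * (-a) ^ k := by
  induction n generalizing a with
  | zero => simp
  | succ n ih =>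
    have hpascal (k : ℕ) : qChoose q (n + 1) (k + 1) * q ^ (k + 1).choose 2 * (-a) ^ (k + 1) =
        qChoose q n (k + 1) * q ^ (k + 1).choose 2 * (-(a * q)) ^ (k + 1) -
          a * (qChoose q n k * q ^ k.choose 2 * (-(a * q)) ^ k) := by
      rw [qChoose_succ_succ, Nat.choose_succ_succ' k 1, Nat.choose_one_right, ← neg_mul, mul_pow,
        mul_pow]
      ring
    have hshift : ∑ k ∈ Finset.range (n + 1),
        qChoose q n (k + 1) * q ^ (k + 1).choose 2 * (-(a * q)) ^ (k + 1) + 1 =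
          finiteQPoch (a * q) q n := by
      rw [ih, Finset.sum_range_succ, qChoose_eq_zero_of_lt q n.lt_succ_self,
        Finset.sum_range_succ' _ n]
      simp
    rw [Finset.sum_range_succ', Finset.sum_congr rfl fun k _ ↦ hpascal k, Finset.sum_sub_distrib,
      ← Finset.mul_sum, ← ih, finiteQPoch_succ', ← hshift]
    simp only [qChoose_zero_right, Nat.choose_zero_succ, pow_zero, mul_one]
    ring

end Finite

section FiniteTripleProduct

lemma two_mul_choose_two_add_self (n : ℕ) : 2 * n.choose 2 + n = n ^ 2 := by
  rw [mul_comm, Nat.choose_two_right, Nat.div_two_mul_two_of_even n.even_mul_pred_self]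
  cases n
  · rfl
  · rw [Nat.add_sub_cancel]
    ring

variable {K : Type*} [Field K] {a q z : K}

lemma finiteQPoch_div_pow_mul (ha : a ≠ 0) (hq : q ≠ 0) (n : ℕ) :
    finiteQPoch (a / q ^ n) q n * q ^ (n + 1).choose 2 = (-a) ^ n * finiteQPoch (q / a) q n := by
  induction n with
  | zero => simp
  | succ n ih =>
    have hshift : a / q ^ (n + 1) * q = a / q ^ n := by
      rw [pow_succ, ← div_div, div_mul_cancel₀ _ hq]
    have hfactor : (1 - a / q ^ (n + 1)) * q ^ (n + 1) = -a * (1 - q / a * q ^ n) := by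
      field_simp
      ring
    rw [finiteQPoch_succ', hshift, Nat.choose_succ_succ' (n + 1) 1, Nat.choose_one_right, pow_add,
      finiteQPoch_succ, pow_succ (-a)]
    linear_combination q ^ (n + 1) * (1 - a / q ^ (n + 1)) * ih +
      (-a) ^ n * finiteQPoch (q / a) q n * hfactor

lemma pow_mul_finiteQPoch_neg_div (hq : q ≠ 0) (hz : z ≠ 0) (n : ℕ) :
    z ^ n * finiteQPoch (-(q / z)) (q ^ 2) n =
      q ^ (n ^ 2) * finiteQPoch (-(z * q) / (q ^ 2) ^ n) (q ^ 2) n := by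
  have h := finiteQPoch_div_pow_mul (neg_ne_zero.mpr (mul_ne_zero hz hq)) (pow_ne_zero 2 hq) n
  have hbase : q ^ 2 / -(z * q) = -(q / z) := by field_simp
  have hexponent : 2 * (n + 1).choose 2 = n ^ 2 + n := by
    linarith [two_mul_choose_two_add_self (n + 1)]
  rw [hbase, neg_neg, mul_pow, ← pow_mul q 2 (Nat.choose _ _), hexponent] at h
  apply mul_right_cancel₀ (pow_ne_zero n hq)
  linear_combination -h

theorem finiteQPoch_mul_finiteQPoch_eq_sum (hq : q ≠ 0) (hz : z ≠ 0) (m n : ℕ) :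
    finiteQPoch (-(z * q)) (q ^ 2) m * finiteQPoch (-(q / z)) (q ^ 2) n =
      ∑ k ∈ Finset.Icc (-n : ℤ) m,
        qChoose (q ^ 2) (n + m) (n + k).toNat * (q ^ (k ^ 2) * z ^ k) := by
  have hterm (j : ℕ) : q ^ (n ^ 2) * ((q ^ 2) ^ j.choose 2 * (-(-(z * q) / (q ^ 2) ^ n)) ^ j) =
      z ^ n * (q ^ ((j - n : ℤ) ^ 2) * z ^ (j - n : ℤ)) := by
    have hexponent :
        (j - n : ℤ) ^ 2 = ((n ^ 2 + 2 * j.choose 2 + j : ℕ) : ℤ) - (2 * n * j : ℕ) := by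
      rw [add_assoc, two_mul_choose_two_add_self]
      push_cast
      ring
    rw [hexponent, zpow_sub₀ hq, zpow_sub₀ hz]
    simp only [zpow_natCast, pow_add, pow_mul, ← neg_div, neg_neg, div_pow, mul_pow]
    field_simp
  have hreindex : ∑ k ∈ Finset.Icc (-n : ℤ) m,
      qChoose (q ^ 2) (n + m) (n + k).toNat * (q ^ (k ^ 2) * z ^ k) =
        ∑ j ∈ Finset.range (n + m + 1),
          qChoose (q ^ 2) (n + m) j * (q ^ ((j - n : ℤ) ^ 2) * z ^ (j - n : ℤ)) := by
    refine Finset.sum_nbij' (fun k ↦ (n + k).toNat) (fun j ↦ j - n) ?_ ?_ ?_ ?_ ?_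
    all_goals grind
  apply mul_left_cancel₀ (pow_ne_zero n hz)
  calc z ^ n * (finiteQPoch (-(z * q)) (q ^ 2) m * finiteQPoch (-(q / z)) (q ^ 2) n)
      = q ^ (n ^ 2) * finiteQPoch (-(z * q) / (q ^ 2) ^ n) (q ^ 2) (n + m) := by
        rw [finiteQPoch_add, div_mul_cancel₀ _ (pow_ne_zero n (pow_ne_zero 2 hq))]
        linear_combination finiteQPoch (-(z * q)) (q ^ 2) m * pow_mul_finiteQPoch_neg_div hq hz n
    _ = _ := by
        rw [finiteQPoch_eq_sum_qChoose, hreindex, Finset.mul_sum, Finset.mul_sum]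
        refine Finset.sum_congr rfl fun j _ ↦ ?_
        linear_combination qChoose (q ^ 2) (n + m) j * hterm j

end FiniteTripleProduct

section NormedField

variable {K : Type*} [NormedField K] {q : K}

lemma summable_norm_mul_pow (a : K) (hq : ‖q‖ < 1) : Summable fun i : ℕ ↦ ‖-(a * q ^ i)‖ := by
  simpa using (summable_geometric_of_lt_one (norm_nonneg _) hq).mul_left ‖a‖

lemma one_sub_mul_pow_ne_zero (hq : ‖q‖ < 1) (i : ℕ) : 1 - q * q ^ i ≠ 0 := by
  rw [← pow_succ', sub_ne_zero]
  intro h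
  have hlt : ‖q ^ (i + 1)‖ < 1 := by
    simpa only [norm_pow] using pow_lt_one₀ (norm_nonneg q) hq i.succ_ne_zero
  simp [← h] at hlt

lemma finiteQPoch_self_ne_zero (hq : ‖q‖ < 1) (n : ℕ) : finiteQPoch q q n ≠ 0 :=
  Finset.prod_ne_zero_iff.mpr fun i _ ↦ one_sub_mul_pow_ne_zero hq i

lemma qChoose_add_eq_div (hq : ‖q‖ < 1) (m n : ℕ) :
    qChoose q (m + n) m = finiteQPoch q q (m + n) / (finiteQPoch q q m * finiteQPoch q q n) := by
  rw [eq_div_iff (mul_ne_zero (finiteQPoch_self_ne_zero hq m) (finiteQPoch_self_ne_zero hq n)),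
    ← mul_assoc, qChoose_mul_finiteQPoch_mul_finiteQPoch]

end NormedField

section Limits

variable {q : ℂ}

lemma tendsto_finiteQPoch (a : ℂ) (hq : ‖q‖ < 1) :
    Tendsto (finiteQPoch a q) atTop (𝓝 (qPoch a q)) := by
  have h := multipliable_one_add_of_summable (summable_norm_mul_pow a hq)
  simp only [← sub_eq_add_neg] at h
  exact h.tendsto_prod_tprod_nat

lemma qPoch_self_ne_zero (hq : ‖q‖ < 1) : qPoch q q ≠ 0 := by
  have h := tprod_one_add_ne_zero_of_summable (f := fun i : ℕ ↦ -(q * q ^ i))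
    (fun i ↦ by simpa only [← sub_eq_add_neg] using one_sub_mul_pow_ne_zero hq i)
    (summable_norm_mul_pow q hq)
  simpa only [← sub_eq_add_neg, qPoch] using h

lemma tendsto_qChoose_add {ι : Type*} {l : Filter ι} {m n : ι → ℕ} (hq : ‖q‖ < 1)
    (hm : Tendsto m l atTop) (hn : Tendsto n l atTop) :
    Tendsto (fun i ↦ qChoose q (m i + n i) (m i)) l (𝓝 (qPoch q q)⁻¹) := by
  have hlim := tendsto_finiteQPoch q hq
  have h0 := qPoch_self_ne_zero hq
  have hquot := (hlim.comp (hm.atTop_add_atTop hn)).div ((hlim.comp hm).mul (hlim.comp hn))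
    (mul_ne_zero h0 h0)
  rw [div_mul_cancel_left₀ h0] at hquot
  exact hquot.congr fun i ↦ (qChoose_add_eq_div hq (m i) (n i)).symm

lemma exists_norm_qChoose_add_le (hq : ‖q‖ < 1) :
    ∃ C, ∀ m n, ‖qChoose q (m + n) m‖ ≤ C := by
  have hlim := tendsto_finiteQPoch q hq
  obtain ⟨A, hA⟩ := (Metric.isBounded_range_of_tendsto _ hlim).exists_norm_le
  obtain ⟨B, hB⟩ := (Metric.isBounded_range_of_tendsto _
    (hlim.inv₀ (qPoch_self_ne_zero hq))).exists_norm_le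
  rw [Set.forall_mem_range] at hA hB
  refine ⟨A * (B * B), fun m n ↦ ?_⟩
  rw [qChoose_add_eq_div hq, div_eq_mul_inv, mul_inv, norm_mul, norm_mul]
  have hA0 := (norm_nonneg _).trans (hA 0)
  have hB0 := (norm_nonneg _).trans (hB 0)
  gcongr
  exacts [hA _, hB _, hB _]

lemma tendsto_sum_qChoose_mul {t : ℤ → ℂ} (hq : ‖q‖ < 1) (ht : Summable t) :
    Tendsto (fun N : ℕ ↦ ∑ k ∈ Finset.Icc (-N : ℤ) N, qChoose q (N + N) (N + k).toNat * t k) atTop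
      (𝓝 ((qPoch q q)⁻¹ * ∑' k, t k)) := by
  obtain ⟨C, hC⟩ := exists_norm_qChoose_add_le hq
  have hsplit {N : ℕ} {k : ℤ} (hk : k ∈ (Finset.Icc (-N : ℤ) N : Set ℤ)) :
      N + N = (N + k).toNat + (N + -k).toNat := by
    rw [Finset.coe_Icc, Set.mem_Icc] at hk
    omega
  simp only [sum_eq_tsum_indicator (L := .unconditional ℤ), ← tsum_mul_left]
  refine tendsto_tsum_of_dominated_convergence (ht.norm.mul_left C) (fun k ↦ ?_)
    (Eventually.of_forall fun N k ↦ ?_)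
  · have hadd (c : ℤ) : Tendsto (fun N : ℕ ↦ (N + c).toNat) atTop atTop :=
      tendsto_atTop.mpr fun b ↦ (eventually_ge_atTop (b + c.natAbs)).mono fun N hN ↦ by omega
    refine ((tendsto_qChoose_add hq (hadd k) (hadd (-k))).mul_const _).congr' ?_
    filter_upwards [eventually_ge_atTop k.natAbs] with N hN
    have hk : k ∈ (Finset.Icc (-N : ℤ) N : Set ℤ) := by
      rw [Finset.coe_Icc, Set.mem_Icc]
      omega
    rw [Set.indicator_of_mem hk, hsplit hk]
  · by_cases hk : k ∈ (Finset.Icc (-N : ℤ) N : Set ℤ)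
    · rw [Set.indicator_of_mem hk, hsplit hk, norm_mul]
      exact mul_le_mul_of_nonneg_right (hC _ _) (norm_nonneg _)
    · rw [Set.indicator_of_notMem hk, norm_zero]
      exact mul_nonneg ((norm_nonneg _).trans (hC 0 0)) (norm_nonneg _)

end Limits

section TripleProduct

lemma jacobiTheta₂_term_eq_zpow (k : ℤ) (z τ : ℂ) :
    jacobiTheta₂_term k z τ =
      cexp (Real.pi * I * τ) ^ (k ^ 2) * cexp (2 * Real.pi * I * z) ^ k := by
  rw [← exp_int_mul, ← exp_int_mul, ← exp_add, jacobiTheta₂_term]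
  congr 1
  push_cast
  ring

variable {q z : ℂ}

lemma summable_zpow_sq_mul_zpow (hq0 : q ≠ 0) (hq : ‖q‖ < 1) (hz : z ≠ 0) :
    Summable fun k : ℤ ↦ q ^ (k ^ 2) * z ^ k := by
  have hτ : 0 < (log q / (Real.pi * I)).im := by
    have him : (log q / (Real.pi * I)).im = -Real.log ‖q‖ / Real.pi := by
      rw [← div_div, div_I, neg_im, mul_I_im, div_ofReal_re, log_re, neg_div]
    rw [him]
    exact div_pos (neg_pos.mpr (Real.log_neg (norm_pos_iff.mpr hq0) hq)) Real.pi_pos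
  have hs := (summable_jacobiTheta₂_term_iff (log z / (2 * Real.pi * I)) _).mpr hτ
  simpa only [jacobiTheta₂_term_eq_zpow, mul_div_cancel₀ _ two_pi_I_ne_zero,
    mul_div_cancel₀ _ (mul_ne_zero (ofReal_ne_zero.mpr Real.pi_ne_zero) I_ne_zero),
    exp_log hq0, exp_log hz] using hs

theorem jacobi_triple_product (hq0 : q ≠ 0) (hq : ‖q‖ < 1) (hz : z ≠ 0) :
    ∑' k : ℤ, q ^ (k ^ 2) * z ^ k =
      qPoch (-(z * q)) (q ^ 2) * qPoch (-(q / z)) (q ^ 2) * qPoch (q ^ 2) (q ^ 2) := by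
  have hp : ‖q ^ 2‖ < 1 := by
    rw [norm_pow]
    exact pow_lt_one₀ (norm_nonneg q) hq two_ne_zero
  have hlim := tendsto_sum_qChoose_mul hp (summable_zpow_sq_mul_zpow hq0 hq hz)
  simp only [← finiteQPoch_mul_finiteQPoch_eq_sum hq0 hz] at hlim
  have heq := tendsto_nhds_unique hlim ((tendsto_finiteQPoch _ hp).mul (tendsto_finiteQPoch _ hp))
  rwa [inv_mul_eq_iff_eq_mul₀ (qPoch_self_ne_zero hp), mul_comm] at heq

end TripleProduct

section Theta

lemma jacobiTheta₂_eq_qPoch (z : ℂ) {τ : ℂ} (hτ : 0 < τ.im) {q w : ℂ}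
    (hq : q = cexp (Real.pi * I * τ)) (hw : w = cexp (2 * Real.pi * I * z)) :
    jacobiTheta₂ z τ =
      qPoch (-(w * q)) (q ^ 2) * qPoch (-(q / w)) (q ^ 2) * qPoch (q ^ 2) (q ^ 2) := by
  have hnorm : ‖q‖ < 1 := by
    rw [hq, norm_exp]
    simpa using mul_pos Real.pi_pos hτ
  rw [← jacobi_triple_product (hq ▸ exp_ne_zero _) hnorm (hw ▸ exp_ne_zero _), jacobiTheta₂, hq, hw]
  exact tsum_congr fun k ↦ jacobiTheta₂_term_eq_zpow k z τ

lemma jacobiTheta₂_half_eq_qPoch {τ : ℂ} (hτ : 0 < τ.im) {q : ℂ}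
    (hq : q = cexp (Real.pi * I * τ)) :
    jacobiTheta₂ (1 / 2) τ = qPoch q (q ^ 2) * qPoch q (q ^ 2) * qPoch (q ^ 2) (q ^ 2) := by
  have hw : -1 = cexp (2 * Real.pi * I * (1 / 2)) := by
    rw [← exp_pi_mul_I]
    congr 1
    ring
  simpa [div_neg] using jacobiTheta₂_eq_qPoch (1 / 2) hτ hq hw

lemma theta1_eq_jacobiTheta₂ (z : ℂ) {τ : ℂ} (hτ : 0 < τ.im) :
    theta1 z τ = -I * cexp (Real.pi * I * τ / 4 + I * z) *
      jacobiTheta₂ (z / Real.pi + 1 / 2 + τ / 2) τ := by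
  have hterm (k : ℤ) : cexp (Real.pi * I * τ / 4 + I * z) *
      jacobiTheta₂_term k (z / Real.pi + 1 / 2 + τ / 2) τ =
        (-1) ^ k * cexp (Real.pi * I * τ * (2 * k + 1) ^ 2 / 4) * cexp ((2 * k + 1) * z * I) := by
    rw [← exp_pi_mul_I, ← exp_int_mul, jacobiTheta₂_term, ← exp_add, ← exp_add, ← exp_add]
    congr 1
    field_simp
    ring
  -- Pairing the terms of index `n` and `-(n + 1)` of the bilateral series produces the sine.
  have hpair := ((hasSum_jacobiTheta₂_term (z / Real.pi + 1 / 2 + τ / 2) hτ).mul_left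
    (cexp (Real.pi * I * τ / 4 + I * z))).nat_add_neg_add_one
  rw [theta1, mul_assoc (-I), ← hpair.tsum_eq, ← tsum_mul_left, ← tsum_mul_left]
  refine tsum_congr fun n ↦ ?_
  have hsquare : (2 * ((-((n : ℤ) + 1) : ℤ) : ℂ) + 1) ^ 2 = (2 * n + 1) ^ 2 := by
    push_cast
    ring
  have hlin : (2 * ((-((n : ℤ) + 1) : ℤ) : ℂ) + 1) * z * I = -((2 * n + 1) * z) * I := by
    push_cast
    ring
  have hsign : (-1 : ℂ) ^ (-((n : ℤ) + 1)) = -(-1) ^ n := by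
    rw [zpow_neg, ← inv_zpow, inv_neg_one, zpow_add_one₀ (by simp), zpow_natCast, mul_neg_one]
  rw [hterm, hterm, hsquare, hlin, hsign, zpow_natCast, Int.cast_natCast, Complex.sin]
  ring

lemma theta1_pi_div_two {τ : ℂ} (hτ : 0 < τ.im) :
    theta1 (Real.pi / 2) τ = (-I * τ) ^ (-(1 / 2) : ℂ) * jacobiTheta₂ (1 / 2) (-1 / τ) := by
  have hτ0 : τ ≠ 0 := fun h ↦ by simp [h] at hτ
  have hphase : -I * cexp (Real.pi * I * τ / 4 + I * (Real.pi / 2)) *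
      cexp (-Real.pi * I * (τ / 2) ^ 2 / τ) = 1 := by
    have hexponent : Real.pi * I * τ / 4 + I * (Real.pi / 2) + -Real.pi * I * (τ / 2) ^ 2 / τ =
        Real.pi / 2 * I := by
      field_simp
      ring
    rw [mul_assoc, ← exp_add, hexponent, exp_pi_div_two_mul_I, neg_mul, I_mul_I, neg_neg]
  have hshift : (Real.pi : ℂ) / 2 / Real.pi + 1 / 2 + τ / 2 = τ / 2 + 1 := by
    field_simp
    ring
  rw [theta1_eq_jacobiTheta₂ _ hτ, hshift, jacobiTheta₂_add_left, jacobiTheta₂_functional_equation,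
    show τ / 2 / τ = 1 / 2 by field_simp, cpow_neg, ← one_div]
  linear_combination 1 / (-I * τ) ^ (1 / 2 : ℂ) * jacobiTheta₂ (1 / 2) (-1 / τ) * hphase

end Theta

theorem theta1_at_pi_over_two (n : ℕ) (hn : 0 < n) (τ : ℂ) (hτ : 0 < τ.im)
    (q : ℂ) (hq : q = Complex.exp (Real.pi * Complex.I * τ))
    (τ' : ℂ) (hτ' : τ' = -1 / τ) :
    theta1 ((Real.pi : ℂ) / 2) (τ' / n) =
      (-Complex.I * τ' / n) ^ (-(1 / 2) : ℂ) *
        (qPoch (q ^ n) (q ^ (2 * n)) * qPoch (q ^ n) (q ^ (2 * n)) *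
          qPoch (q ^ (2 * n)) (q ^ (2 * n))) := by
  have hnτ : 0 < (n * τ).im := by
    simpa using mul_pos (Nat.cast_pos.mpr hn) hτ
  have hinv : τ' / n = (-(n * τ))⁻¹ := by
    rw [hτ']
    field_simp
  have him : 0 < (τ' / n).im := hinv ▸ UpperHalfPlane.im_inv_neg_coe_pos ⟨n * τ, hnτ⟩
  have hinv' : -1 / (τ' / n) = n * τ := by
    rw [hinv, div_inv_eq_mul, neg_mul_neg, one_mul]
  have hqn : q ^ n = cexp (Real.pi * I * (n * τ)) := by
    rw [hq, ← exp_nat_mul]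
    congr 1
    ring
  rw [theta1_pi_div_two him, hinv', jacobiTheta₂_half_eq_qPoch hnτ hqn, mul_div_assoc, mul_comm 2 n,
    pow_mul]
end
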